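/- arXiv:2108.00736 — 4 statements merged into one kernel-verified Lean document; each statement's English description precedes it below -/
import Mathlib

section
/- For every ℓ with 2ℓ ∈ ℕ and every pair of admissible indices m, s ∈ {−ℓ, −ℓ+1, …, ℓ}, the extended Wigner function D̂^ℓ_{m,s} : ℂ² → ℂ is a polynomial in α, conj(α), β, conj(β) of total degree 2ℓ which is real-homogeneous of degree 2ℓ (D̂^ℓ_{m,s}(tα, tβ) = t^{2ℓ} D̂^ℓ_{m,s}(α, β) for all real t ≥ 0) and harmonic on ℝ⁴ ≅ ℂ²: writing α = x₀ + i y₀ and β = x₁ + i y₁, one has (∂²/∂x₀² + ∂²/∂y₀² + ∂²/∂x₁² + ∂²/∂y₁²) D̂^ℓ_{m,s} = 0 identically on ℂ². -/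
open scoped ComplexConjugate
open Complex

noncomputable section

/-- The second directional derivative (in the real sense) of `f : ℂ × ℂ → ℂ` in the
direction `v`, evaluated at `p`.  Summing `dd f v p` over the four directions
`(1,0), (I,0), (0,1), (0,I)` (i.e. `∂²/∂x₀² + ∂²/∂y₀² + ∂²/∂x₁² + ∂²/∂y₁²` with
`α = x₀ + i y₀`, `β = x₁ + i y₁`) gives the Laplacian of `ℝ⁴ ≅ ℂ²`. -/
def dd (f : ℂ × ℂ → ℂ) (v p : ℂ × ℂ) : ℂ :=
  fderiv ℝ (fun q => fderiv ℝ f q v) p v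

theorem aux_homog_mul {R : Type*} [CommRing R] {σ : Type*} {p q : Polynomial (MvPolynomial σ R)} {d e : ℕ}
    (hp : ∀ i, (p.coeff i).IsHomogeneous d) (hq : ∀ i, (q.coeff i).IsHomogeneous e) :
    ∀ i, ((p * q).coeff i).IsHomogeneous (d + e) := by
  intro i
  rw [Polynomial.coeff_mul]
  exact MvPolynomial.IsHomogeneous.sum _ _ _ fun x _ => (hp _).mul (hq _)

theorem aux_homog_pow {R : Type*} [CommRing R] {σ : Type*} {p : Polynomial (MvPolynomial σ R)}
    (hp : ∀ i, (p.coeff i).IsHomogeneous 1) (m : ℕ) :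
    ∀ i, ((p ^ m).coeff i).IsHomogeneous m := by
  induction m with
  | zero =>
    intro i
    rw [pow_zero, Polynomial.coeff_one]
    split_ifs
    · exact MvPolynomial.isHomogeneous_one _ _
    · exact MvPolynomial.isHomogeneous_zero _ _ _
  | succ m ih =>
    rw [pow_succ]
    exact aux_homog_mul ih hp

theorem aux_homog_lin {R : Type*} [CommRing R] {σ : Type*} {a b : MvPolynomial σ R}
    (ha : a.IsHomogeneous 1) (hb : b.IsHomogeneous 1) :
    ∀ i, ((Polynomial.C a * Polynomial.X + Polynomial.C b).coeff i).IsHomogeneous 1 := by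
  intro i
  rcases i with _ | _ | i
  · simpa using hb
  · simpa [Polynomial.coeff_C] using ha
  · simpa [Polynomial.coeff_C, Polynomial.coeff_X] using MvPolynomial.isHomogeneous_zero _ _ _

/-- generating polynomial -/
def genP {R : Type*} [CommRing R] (k l : ℕ) (x y z w : R) : Polynomial R :=
  (Polynomial.C y * Polynomial.X + Polynomial.C w) ^ k *
    (Polynomial.C (-z) * Polynomial.X + Polynomial.C x) ^ l

theorem genP_map {R S : Type*} [CommRing R] [CommRing S] (f : R →+* S) (k l : ℕ) (x y z w : R) :
    (genP k l x y z w).map f = genP k l (f x) (f y) (f z) (f w) := by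
  simp [genP]

theorem dd_finset_sum {ι : Type*} (s : Finset ι) (c : ι → ℂ) (f : ι → ℂ × ℂ → ℂ)
    (hf : ∀ i, ContDiff ℝ 2 (f i)) (v p : ℂ × ℂ) :
    dd (fun q => ∑ i ∈ s, c i * f i q) v p = ∑ i ∈ s, c i * dd (f i) v p := by
  unfold dd
  have h1 : ∀ i, Differentiable ℝ (f i) := fun i => (hf i).differentiable (by norm_num)
  have h2 : ∀ i, Differentiable ℝ (fun q => fderiv ℝ (f i) q v) := fun i =>
    (((hf i).fderiv_right (m := 1) (by norm_num)).differentiable (by norm_num)).clm_apply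
      (differentiable_const v)
  have e1 : (fun q => fderiv ℝ (fun q => ∑ i ∈ s, c i * f i q) q v)
      = fun q => ∑ i ∈ s, c i * fderiv ℝ (f i) q v := by
    funext q
    rw [fderiv_fun_sum fun i _ => ((h1 i q).const_mul (c i))]
    simp only [ContinuousLinearMap.sum_apply]
    refine Finset.sum_congr rfl fun i _ => ?_
    rw [fderiv_const_mul (h1 i q)]
    simp
  rw [e1, fderiv_fun_sum fun i _ => ((h2 i p).const_mul (c i))]
  simp only [ContinuousLinearMap.sum_apply]
  refine Finset.sum_congr rfl fun i _ => ?_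
  rw [fderiv_const_mul (h2 i p)]
  simp

theorem aux_fderiv (L M : ℂ × ℂ →L[ℝ] ℂ) (k l : ℕ) (q v : ℂ × ℂ) :
    fderiv ℝ (fun q => L q ^ k * M q ^ l) q v
      = (k * L v) * (L q ^ (k - 1) * M q ^ l) + (l * M v) * (L q ^ k * M q ^ (l - 1)) := by
  have h := ((L.hasFDerivAt (x := q)).pow k).mul ((M.hasFDerivAt (x := q)).pow l)
  have h' : HasFDerivAt (fun q => L q ^ k * M q ^ l) _ q := h
  rw [h'.fderiv]
  simp
  ring

theorem aux_dd (L M : ℂ × ℂ →L[ℝ] ℂ) (k l : ℕ) (p : ℂ × ℂ) :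
    ∃ A B C : ℂ, ∀ v, dd (fun q => L q ^ k * M q ^ l) v p
      = A * (L v * L v) + B * (L v * M v) + C * (M v * M v) := by
  have hd : ∀ a b : ℕ, DifferentiableAt ℝ (fun q => L q ^ a * M q ^ b) p := fun a b => by fun_prop
  refine ⟨k * (k - 1 : ℕ) * (L p ^ (k - 1 - 1) * M p ^ l),
    2 * (k * l * (L p ^ (k - 1) * M p ^ (l - 1))),
    l * (l - 1 : ℕ) * (L p ^ k * M p ^ (l - 1 - 1)), fun v => ?_⟩
  unfold dd
  simp only [aux_fderiv]
  rw [fderiv_fun_add ((hd _ _).const_mul _) ((hd _ _).const_mul _),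
    fderiv_const_mul (hd _ _), fderiv_const_mul (hd _ _)]
  simp only [ContinuousLinearMap.add_apply, ContinuousLinearMap.smul_apply, aux_fderiv, smul_eq_mul]
  ring

theorem aux_harm (z : ℂ) (k l : ℕ) (p : ℂ × ℂ) :
    let f : ℂ × ℂ → ℂ := fun q => (conj q.1 * z + conj q.2) ^ k * (-q.2 * z + q.1) ^ l
    dd f (1, 0) p + dd f (Complex.I, 0) p + dd f (0, 1) p + dd f (0, Complex.I) p = 0 := by
  intro f
  let L : ℂ × ℂ →L[ℝ] ℂ :=
    z • ((Complex.conjCLE : ℂ →L[ℝ] ℂ).comp (ContinuousLinearMap.fst ℝ ℂ ℂ))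
      + (Complex.conjCLE : ℂ →L[ℝ] ℂ).comp (ContinuousLinearMap.snd ℝ ℂ ℂ)
  let M : ℂ × ℂ →L[ℝ] ℂ :=
    (-z) • (ContinuousLinearMap.snd ℝ ℂ ℂ) + ContinuousLinearMap.fst ℝ ℂ ℂ
  have hL : ∀ q, L q = conj q.1 * z + conj q.2 := fun q => by simp [L, mul_comm]
  have hM : ∀ q, M q = -q.2 * z + q.1 := fun q => by simp [M, mul_comm]
  have hf : f = fun q => L q ^ k * M q ^ l := by
    funext q; simp only [f, hL, hM]
  obtain ⟨A, B, C, h⟩ := aux_dd L M k l p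
  rw [hf, h, h, h, h]
  simp only [hL, hM]
  simp only [map_one, map_zero, Complex.conj_I]
  linear_combination (A * z ^ 2 + A + 2 * 0 + C + C * z ^ 2 - B * z + B * z) * Complex.I_mul_I

theorem aux_smooth (P : MvPolynomial (Fin 4) ℂ) :
    ContDiff ℝ 2 (fun q : ℂ × ℂ => MvPolynomial.eval (![q.1, conj q.1, q.2, conj q.2]) P) := by
  have hc : ContDiff ℝ 2 (fun z : ℂ => conj z) := (Complex.conjCLE : ℂ →L[ℝ] ℂ).contDiff
  induction P using MvPolynomial.induction_on with
  | C a => simpa using contDiff_const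
  | add p q hp hq => simpa using hp.add hq
  | mul_X p i hp =>
    simp only [map_mul, MvPolynomial.eval_X]
    refine hp.mul ?_
    fin_cases i
    · exact contDiff_fst
    · exact hc.comp contDiff_fst
    · exact contDiff_snd
    · exact hc.comp contDiff_snd

theorem aux_coeff (n : ℕ) (a : Fin (n + 1) → ℂ) (Q : Polynomial ℂ)
    (h : ∀ z : ℂ, ∑ j : Fin (n + 1), a j * z ^ (j : ℕ) = Q.eval z) (j : Fin (n + 1)) :
    a j = Q.coeff j := by
  have : ∑ j : Fin (n + 1), Polynomial.C (a j) * Polynomial.X ^ (j : ℕ) = Q := by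
    apply Polynomial.funext
    intro z
    simp [Polynomial.eval_finset_sum, h]
  rw [← this]
  simp [Polynomial.finset_sum_coeff, Polynomial.coeff_X_pow, Fin.val_inj]

/-- each extended Wigner function `D̂^ℓ_{m,s} : ℂ² → ℂ` is a polynomial in
`α, conj α, β, conj β` of total degree `2ℓ`, positively real-homogeneous of degree `2ℓ`,
and harmonic on `ℝ⁴ ≅ ℂ²`. -/
theorem extended_wigner_polynomial_homogeneous_harmonic
    (n : ℕ) (k : Fin (n + 1)) (F : Fin (n + 1) → ℂ → ℂ → ℂ)
    (hF : ∀ a b z₀ z₁ : ℂ,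
      ∑ j : Fin (n + 1),
          (Real.sqrt (n.choose (j : ℕ)) : ℂ) * z₀ ^ (j : ℕ) * z₁ ^ (n - (j : ℕ)) * F j a b
        = (Real.sqrt (n.choose (k : ℕ)) : ℂ) * (conj a * z₀ + conj b * z₁) ^ (k : ℕ)
            * (-b * z₀ + a * z₁) ^ (n - (k : ℕ)))
    (j : Fin (n + 1)) :
    (∃ P : MvPolynomial (Fin 4) ℂ, P.totalDegree = n ∧
        ∀ a b : ℂ, F j a b = MvPolynomial.eval (![a, conj a, b, conj b]) P) ∧
    (∀ t : ℝ, 0 ≤ t → ∀ a b : ℂ,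
        F j ((t : ℂ) * a) ((t : ℂ) * b) = (t : ℂ) ^ n * F j a b) ∧
    (∀ p : ℂ × ℂ,
        dd (fun q => F j q.1 q.2) (1, 0) p + dd (fun q => F j q.1 q.2) (Complex.I, 0) p
          + dd (fun q => F j q.1 q.2) (0, 1) p + dd (fun q => F j q.1 q.2) (0, Complex.I) p
          = 0) := by
  have hc : ∀ i : Fin (n + 1), (Real.sqrt (n.choose (i : ℕ)) : ℂ) ≠ 0 := by
    intro i
    have : 0 < n.choose (i : ℕ) := Nat.choose_pos (Nat.lt_succ_iff.mp i.2)
    have : 0 < Real.sqrt (n.choose (i : ℕ)) := Real.sqrt_pos.mpr (by exact_mod_cast this)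
    exact_mod_cast this.ne'
  have hkn : (k : ℕ) + (n - (k : ℕ)) = n := by have := k.2; omega
  set c : Fin (n + 1) → ℂ := fun i => (Real.sqrt (n.choose (i : ℕ)) : ℂ) with hcdef
  have key : ∀ (i : Fin (n + 1)) (a b : ℂ), F i a b
      = c k / c i * (genP k (n - k) a (conj a) b (conj b)).coeff i := by
    intro i a b
    have := aux_coeff n (fun i => c i * F i a b)
      (Polynomial.C (c k) * genP k (n - k) a (conj a) b (conj b)) (fun z => by
        have h := hF a b z 1
        simp only [one_pow, mul_one] at h
        simp only [genP, Polynomial.eval_mul, Polynomial.eval_pow, Polynomial.eval_add,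
          Polynomial.eval_C, Polynomial.eval_X]
        rw [← mul_assoc, ← h]
        exact Finset.sum_congr rfl fun i _ => by simp only [c]; ring) i
    rw [Polynomial.coeff_C_mul] at this
    have h0 : c i ≠ 0 := hc i
    field_simp
    rw [mul_comm]
    exact this
  let G : Polynomial (MvPolynomial (Fin 4) ℂ) :=
    genP k (n - k) (MvPolynomial.X 0) (MvPolynomial.X 1) (MvPolynomial.X 2) (MvPolynomial.X 3)
  have hG : ∀ i, (G.coeff i).IsHomogeneous n := by
    have h := aux_homog_mul
      (aux_homog_pow (aux_homog_lin (MvPolynomial.isHomogeneous_X ℂ (1 : Fin 4))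
        (MvPolynomial.isHomogeneous_X ℂ (3 : Fin 4))) k)
      (aux_homog_pow (aux_homog_lin (MvPolynomial.isHomogeneous_X ℂ (2 : Fin 4)).neg
        (MvPolynomial.isHomogeneous_X ℂ (0 : Fin 4))) (n - k))
    rw [hkn] at h
    exact h
  have hGe : ∀ (x : Fin 4 → ℂ) i, MvPolynomial.eval x (G.coeff i)
      = (genP k (n - k) (x 0) (x 1) (x 2) (x 3)).coeff i := by
    intro x i
    rw [← Polynomial.coeff_map]
    simp only [G, genP_map, MvPolynomial.eval_X]
  let P : Fin (n + 1) → MvPolynomial (Fin 4) ℂ := fun i => MvPolynomial.C (c k / c i) * G.coeff i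
  have hP : ∀ (i : Fin (n + 1)) (a b : ℂ),
      F i a b = MvPolynomial.eval (![a, conj a, b, conj b]) (P i) := by
    intro i a b
    simp only [P, map_mul, MvPolynomial.eval_C, hGe]
    rw [key]
    rfl
  have hPh : (P j).IsHomogeneous n := by
    have := (MvPolynomial.isHomogeneous_C (Fin 4) (c k / c j)).mul (hG j)
    rwa [zero_add] at this
  have hP0 : P j ≠ 0 := by
    intro h
    have h1 : MvPolynomial.eval ![1, 1, -1, 1] (P j) = 0 := by rw [h, map_zero]
    simp only [P, map_mul, MvPolynomial.eval_C, hGe] at h1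
    have h2 : genP k (n - k) (1 : ℂ) 1 (-1) 1 = (Polynomial.X + 1) ^ n := by
      simp only [genP, neg_neg, map_one, one_mul]
      rw [← pow_add, hkn]
    have h3 : c k / c j * (genP k (n - k) (1 : ℂ) 1 (-1) 1).coeff j = 0 := h1
    rw [h2, Polynomial.coeff_X_add_one_pow] at h3
    have h4 : (n.choose (j : ℕ) : ℂ) ≠ 0 :=
      Nat.cast_ne_zero.mpr (Nat.choose_pos (Nat.lt_succ_iff.mp j.2)).ne'
    exact mul_ne_zero (div_ne_zero (hc k) (hc j)) h4 h3
  refine ⟨⟨P j, hPh.totalDegree hP0, hP j⟩, ?_, ?_⟩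
  · intro t _ a b
    have : genP k (n - k) ((t : ℂ) * a) (conj ((t : ℂ) * a)) (t * b) (conj ((t : ℂ) * b))
        = Polynomial.C ((t : ℂ) ^ n) * genP k (n - k) a (conj a) b (conj b) := by
      simp only [genP, map_mul, Complex.conj_ofReal, map_neg, map_pow]
      have e : (Polynomial.C (t : ℂ)) ^ n
        = Polynomial.C (t : ℂ) ^ (k : ℕ) * Polynomial.C (t : ℂ) ^ (n - (k : ℕ)) := by
        rw [← pow_add, hkn]
      rw [e, mul_mul_mul_comm, ← mul_pow, ← mul_pow]
      congr 2 <;> ring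
    rw [key, key, this, Polynomial.coeff_C_mul]
    ring
  · intro p
    have hs : ∀ i, ContDiff ℝ 2 (fun q : ℂ × ℂ => F i q.1 q.2) := by
      intro i
      simp only [hP]
      exact aux_smooth _
    have hz := aux_coeff n (fun i => c i * (dd (fun q => F i q.1 q.2) (1, 0) p
      + dd (fun q => F i q.1 q.2) (Complex.I, 0) p
      + dd (fun q => F i q.1 q.2) (0, 1) p + dd (fun q => F i q.1 q.2) (0, Complex.I) p)) 0
      (fun z => by
        have hh := aux_harm z k (n - k) p
        have e : (fun q : ℂ × ℂ => (conj q.1 * z + conj q.2) ^ (k : ℕ)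
              * (-q.2 * z + q.1) ^ (n - (k : ℕ)))
            = fun q => ∑ i : Fin (n + 1), (c i * z ^ (i : ℕ) / c k) * F i q.1 q.2 := by
          funext q
          have h := hF q.1 q.2 z 1
          simp only [one_pow, mul_one] at h
          have h0 : c k ≠ 0 := hc k
          apply mul_left_cancel₀ h0
          rw [← mul_assoc, ← h, Finset.mul_sum]
          refine Finset.sum_congr rfl fun i _ => ?_
          field_simp
          simp only [c]
          ring
        simp only at hh
        rw [e] at hh
        simp only [dd_finset_sum _ _ (fun i (q : ℂ × ℂ) => F i q.1 q.2) hs] at hh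
        rw [← Finset.sum_add_distrib, ← Finset.sum_add_distrib, ← Finset.sum_add_distrib] at hh
        rw [Polynomial.eval_zero]
        refine Eq.trans ?_ ((congrArg (fun x => c k * x) hh).trans (mul_zero _))
        simp only [Finset.mul_sum]
        refine Finset.sum_congr rfl fun i _ => ?_
        have h0 : c k ≠ 0 := hc k
        field_simp
        try ring) j
    rw [Polynomial.coeff_zero] at hz
    exact (mul_eq_zero.mp hz).resolve_left (hc j)
end
end

section
/- Let z₀, z₁ ∈ ℂ be fixed and let f : ℂ² → ℂ be an entire holomorphic function. Then the function φ : ℂ² → ℂ defined by φ(α, β) := f(conj(α) z₀ − β z₁, conj(β) z₀ + α z₁) is harmonic on ℝ⁴ ≅ ℂ²: writing α = x₀ + i y₀ and β = x₁ + i y₁, one has (∂²/∂x₀² + ∂²/∂y₀² + ∂²/∂x₁² + ∂²/∂y₁²) φ = 0 identically. -/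
open scoped ComplexConjugate
open Complex

noncomputable section

/-- Cauchy estimate for the differential. -/
theorem norm_fderiv_le_aux (f : ℂ × ℂ → ℂ) (hf : Differentiable ℂ f) (q : ℂ × ℂ) (M : ℝ)
    (hM : 0 ≤ M) (h : ∀ w, ‖w - q‖ ≤ 1 → ‖f w‖ ≤ M) : ‖fderiv ℂ f q‖ ≤ M := by
  refine ContinuousLinearMap.opNorm_le_of_unit_norm hM fun w hw => ?_
  have hd : HasDerivAt (fun t : ℂ => f (q + t • w)) (fderiv ℂ f q w) 0 := by
    have h1 : HasDerivAt (fun t : ℂ => q + t • w) w 0 := by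
      simpa using ((hasDerivAt_id (0 : ℂ)).smul_const w).const_add q
    have h2 : HasFDerivAt f (fderiv ℂ f q) (q + (0 : ℂ) • w) := by
      simpa using (hf q).hasFDerivAt
    exact h2.comp_hasDerivAt (0 : ℂ) h1
  rw [← hd.deriv]
  have hD : Differentiable ℂ (fun t : ℂ => f (q + t • w)) :=
    hf.comp (by fun_prop)
  have := Complex.norm_deriv_le_of_forall_mem_sphere_norm_le (c := 0) (R := 1) (C := M)
    (f := fun t : ℂ => f (q + t • w)) one_pos hD.diffContOnCl (fun z hz => by
      apply h
      have : ‖z‖ = 1 := by simpa using hz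
      simp [norm_smul, this, hw])
  simpa using this

theorem fderiv_eq_integral_aux (f : ℂ × ℂ → ℂ) (hf : Differentiable ℂ f) (q v : ℂ × ℂ) :
    fderiv ℂ f q v = (2 * Real.pi * I : ℂ)⁻¹ * ∫ θ in (0 : ℝ)..2 * Real.pi,
      (deriv (circleMap 0 1) θ * ((circleMap 0 1 θ) ^ 2)⁻¹) • f (q + circleMap 0 1 θ • v) := by
  have hd : HasDerivAt (fun t : ℂ => f (q + t • v)) (fderiv ℂ f q v) 0 := by
    have h1 : HasDerivAt (fun t : ℂ => q + t • v) v 0 := by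
      simpa using ((hasDerivAt_id (0 : ℂ)).smul_const v).const_add q
    have h2 : HasFDerivAt f (fderiv ℂ f q) (q + (0 : ℂ) • v) := by
      simpa using (hf q).hasFDerivAt
    exact h2.comp_hasDerivAt (0 : ℂ) h1
  have hD : Differentiable ℂ (fun t : ℂ => f (q + t • v)) :=
    hf.comp (by fun_prop)
  rw [← hd.deriv, ← Complex.cderiv_eq_deriv isOpen_univ hD.differentiableOn one_pos
    (Set.subset_univ _), Complex.cderiv, circleIntegral]
  simp [mul_assoc]

theorem differentiable_fderiv_aux (f : ℂ × ℂ → ℂ) (hf : Differentiable ℂ f) (v : ℂ × ℂ) :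
    Differentiable ℂ (fun q => fderiv ℂ f q v) := by
  intro p
  have hfe : (fun q => fderiv ℂ f q v) = fun q =>
      (2 * Real.pi * I : ℂ)⁻¹ * ∫ θ in (0 : ℝ)..2 * Real.pi,
      (deriv (circleMap 0 1) θ * ((circleMap 0 1 θ) ^ 2)⁻¹) • f (q + circleMap 0 1 θ • v) :=
    funext fun q => fderiv_eq_integral_aux f hf q v
  rw [hfe]
  obtain ⟨M, hM⟩ := (isCompact_closedBall p (‖v‖ + 2)).exists_bound_of_continuousOn
    hf.continuous.continuousOn
  have hM0 : 0 ≤ M := (norm_nonneg _).trans (hM p (Metric.mem_closedBall_self (by positivity)))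
  have hcm : Continuous (circleMap 0 1) := continuous_circleMap 0 1
  have hc : Continuous fun θ : ℝ => deriv (circleMap 0 1) θ * ((circleMap 0 1 θ) ^ 2)⁻¹ := by
    simp only [deriv_circleMap]
    refine (hcm.mul continuous_const).mul ((hcm.pow 2).inv₀ fun θ => ?_)
    exact pow_ne_zero _ (circleMap_ne_center one_ne_zero)
  have hcn : ∀ θ : ℝ, ‖deriv (circleMap 0 1) θ * ((circleMap 0 1 θ) ^ 2)⁻¹‖ = 1 := by
    intro θ
    simp [deriv_circleMap]
  have hF : ∀ x, Continuous fun θ : ℝ =>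
      (deriv (circleMap 0 1) θ * ((circleMap 0 1 θ) ^ 2)⁻¹) • f (x + circleMap 0 1 θ • v) :=
    fun x => hc.smul (hf.continuous.comp (by fun_prop))
  refine DifferentiableAt.const_mul (HasFDerivAt.differentiableAt
    (intervalIntegral.hasFDerivAt_integral_of_dominated_of_fderiv_le
    (F' := fun x θ => (deriv (circleMap 0 1) θ * ((circleMap 0 1 θ) ^ 2)⁻¹) •
      fderiv ℂ f (x + circleMap 0 1 θ • v)) (bound := fun _ => M)
    (Metric.ball_mem_nhds p one_pos)
    (Filter.Eventually.of_forall fun x => (hF x).aestronglyMeasurable)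
    ((hF p).intervalIntegrable _ _) ?_ ?_ (by simp) ?_)) _
  · refine (hc.aestronglyMeasurable).smul ?_
    refine Measurable.aestronglyMeasurable ?_
    exact (measurable_fderiv ℂ f).comp
      (by fun_prop : Continuous fun θ : ℝ => p + circleMap 0 1 θ • v).measurable
  · refine Filter.Eventually.of_forall fun θ _ x hx => ?_
    rw [norm_smul, hcn, one_mul]
    refine norm_fderiv_le_aux f hf _ M hM0 fun w hw => hM w ?_
    rw [mem_closedBall_iff_norm]
    rw [mem_ball_iff_norm] at hx
    have e : w - p = (w - (x + circleMap 0 1 θ • v)) + (x - p) + circleMap 0 1 θ • v := by abel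
    have hv : ‖circleMap 0 1 θ • v‖ = ‖v‖ := by rw [norm_smul]; simp
    rw [e]
    refine (norm_add₃_le).trans ?_
    linarith
  · refine Filter.Eventually.of_forall fun θ _ x _ => ?_
    have h0 : HasFDerivAt (fun x => f (x + circleMap 0 1 θ • v))
        (fderiv ℂ f (x + circleMap 0 1 θ • v)) x :=
      (hasFDerivAt_comp_add_right _).2 (hf _).hasFDerivAt
    exact h0.const_smul (deriv (circleMap 0 1) θ * ((circleMap 0 1 θ) ^ 2)⁻¹)

/-- The real-linear twist. -/
def twistL (z₀ z₁ : ℂ) : ℂ × ℂ →L[ℝ] ℂ × ℂ :=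
  LinearMap.toContinuousLinearMap
  { toFun := fun q => (conj q.1 * z₀ - q.2 * z₁, conj q.2 * z₀ + q.1 * z₁)
    map_add' := fun a b => by ext1 <;> simp <;> ring
    map_smul' := fun c a => by ext1 <;> simp <;> ring }

theorem dd_comp_aux (f : ℂ × ℂ → ℂ) (hf : Differentiable ℂ f) (L : ℂ × ℂ →L[ℝ] ℂ × ℂ)
    (v p : ℂ × ℂ) :
    dd (fun q => f (L q)) v p = fderiv ℂ (fun y => fderiv ℂ f y (L v)) (L p) (L v) := by
  have key : ∀ (g : ℂ × ℂ → ℂ), Differentiable ℂ g → ∀ q,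
      fderiv ℝ (fun q => g (L q)) q v = fderiv ℂ g (L q) (L v) := by
    intro g hg q
    have h := ((hg (L q)).hasFDerivAt.restrictScalars ℝ).comp q L.hasFDerivAt
    have h2 := h.fderiv
    change fderiv ℝ (fun q => g (L q)) q = _ at h2
    rw [h2]; rfl
  unfold dd
  rw [funext (key f hf)]
  exact key _ (differentiable_fderiv_aux f hf (L v)) p

theorem bilin_aux (f : ℂ × ℂ → ℂ) (hf : Differentiable ℂ f) (y : ℂ × ℂ) (a b : ℂ) :
    fderiv ℂ (fun y => fderiv ℂ f y (a, b)) y (a, b) =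
      a * a * fderiv ℂ (fun y => fderiv ℂ f y (1, 0)) y (1, 0)
      + a * b * (fderiv ℂ (fun y => fderiv ℂ f y (1, 0)) y (0, 1)
        + fderiv ℂ (fun y => fderiv ℂ f y (0, 1)) y (1, 0))
      + b * b * fderiv ℂ (fun y => fderiv ℂ f y (0, 1)) y (0, 1) := by
  have hab : ((a, b) : ℂ × ℂ) = a • (1, 0) + b • (0, 1) := by simp
  have h1 : (fun y => fderiv ℂ f y (a, b)) =
      fun y => a * fderiv ℂ f y (1, 0) + b * fderiv ℂ f y (0, 1) := by
    funext y
    rw [hab, map_add, map_smul, map_smul]; rfl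
  have d1 := (differentiable_fderiv_aux f hf (1, 0) y).hasFDerivAt
  have d2 := (differentiable_fderiv_aux f hf (0, 1) y).hasFDerivAt
  rw [h1, ((d1.const_mul a).fun_add (d2.const_mul b)).fderiv, hab]
  simp only [map_add, map_smul, add_apply, smul_apply,
    smul_eq_mul]
  ring

/-- if `f : ℂ² → ℂ` is entire holomorphic, then for fixed `z₀, z₁` the function
`φ(α,β) = f (conj α • z₀ − β z₁, conj β • z₀ + α z₁)` is harmonic on `ℝ⁴ ≅ ℂ²`. -/
theorem holomorphic_twist_harmonic (z₀ z₁ : ℂ) (f : ℂ × ℂ → ℂ) (hf : Differentiable ℂ f)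
    (p : ℂ × ℂ) :
    dd (fun q : ℂ × ℂ => f (conj q.1 * z₀ - q.2 * z₁, conj q.2 * z₀ + q.1 * z₁)) (1, 0) p
      + dd (fun q : ℂ × ℂ => f (conj q.1 * z₀ - q.2 * z₁, conj q.2 * z₀ + q.1 * z₁))
          (Complex.I, 0) p
      + dd (fun q : ℂ × ℂ => f (conj q.1 * z₀ - q.2 * z₁, conj q.2 * z₀ + q.1 * z₁)) (0, 1) p
      + dd (fun q : ℂ × ℂ => f (conj q.1 * z₀ - q.2 * z₁, conj q.2 * z₀ + q.1 * z₁))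
          (0, Complex.I) p
      = 0 := by
  have h := fun v => dd_comp_aux f hf (twistL z₀ z₁) v p
  have e : ∀ q, twistL z₀ z₁ q = (conj q.1 * z₀ - q.2 * z₁, conj q.2 * z₀ + q.1 * z₁) :=
    fun _ => rfl
  simp only [e] at h
  rw [h, h, h, h]
  simp only [bilin_aux f hf _ (_ - _) (_ + _)]
  simp only [map_one, map_zero, conj_I]
  ring_nf
  simp only [I_sq]
  ring
end
end

section
/- Schur orthogonality for Wigner functions: for all ℓ, ℓ' with 2ℓ, 2ℓ' ∈ ℕ and all admissible indices m, s ∈ {−ℓ,…,ℓ}, m', s' ∈ {−ℓ',…,ℓ'}, one has ∫_{SU(2)} D^ℓ_{m,s}(g) · conj(D^{ℓ'}_{m',s'}(g)) dμ(g) = δ_{ℓ,ℓ'} δ_{m,m'} δ_{s,s'} / (2ℓ+1). -/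
open scoped ComplexConjugate Matrix
open MeasureTheory Complex

noncomputable section

/-- `SU(2)` realized as the subgroup of the `2 × 2` complex unitary group consisting of the
matrices of determinant one; its elements are exactly the matrices
`h(α,β) = !![α, -conj β; β, conj α]` with `|α|² + |β|² = 1`. -/
def SU2 : Subgroup (Matrix.unitaryGroup (Fin 2) ℂ) where
  carrier := {A | (A : Matrix (Fin 2) (Fin 2) ℂ).det = 1}
  mul_mem' := by
    intro A B hA hB
    simp only [Set.mem_setOf_eq] at *
    simp [Matrix.UnitaryGroup.mul_val, Matrix.det_mul, hA, hB]
  one_mem' := by simp [Set.mem_setOf_eq]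
  inv_mem' := by
    intro A hA
    simp only [Set.mem_setOf_eq] at *
    simp [Matrix.UnitaryGroup.inv_val, Matrix.star_eq_conjTranspose, Matrix.det_conjTranspose, hA]

instance : MeasurableSpace SU2 := borel SU2
instance : BorelSpace SU2 := ⟨rfl⟩

/-- The matrix `h(α,β)`. -/
def h (a b : ℂ) : Matrix (Fin 2) (Fin 2) ℂ := !![a, -conj b; b, conj a]

/-- The entry `α` of an element `g = h(α,β)` of `SU(2)`. -/
def ga (g : SU2) : ℂ := g.1.1 0 0

/-- The entry `β` of an element `g = h(α,β)` of `SU(2)`. -/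
def gb (g : SU2) : ℂ := g.1.1 1 0

/-- `IsWigner n D` states that `D` is the family of Wigner functions `D^ℓ_{m,s}` for `ℓ = n/2`,
where the row index `j` corresponds to `m = j - ℓ` and the column index `k` to `s = k - ℓ`:
for every `g = h(α,β) ∈ SU(2)` and all `z₀ z₁ : ℂ`,
`∑ⱼ √(binom n j) z₀^j z₁^(n-j) D j k g = √(binom n k) (conj α z₀ + conj β z₁)^k (-β z₀ + α z₁)^(n-k)`. -/
def IsWigner (n : ℕ) (D : Fin (n + 1) → Fin (n + 1) → SU2 → ℂ) : Prop :=
  ∀ (g : SU2) (k : Fin (n + 1)) (z₀ z₁ : ℂ),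
    ∑ j : Fin (n + 1),
        (Real.sqrt (n.choose (j : ℕ)) : ℂ) * z₀ ^ (j : ℕ) * z₁ ^ (n - (j : ℕ)) * D j k g
      = (Real.sqrt (n.choose (k : ℕ)) : ℂ) * (conj (ga g) * z₀ + conj (gb g) * z₁) ^ (k : ℕ)
          * (-(gb g) * z₀ + ga g * z₁) ^ (n - (k : ℕ))

/-- The action of the Wigner matrix `D^ℓ(g)` on a vector `v ∈ ℂ^{2ℓ+1}`. -/
def DVec {n : ℕ} (D : Fin (n + 1) → Fin (n + 1) → SU2 → ℂ) (g : SU2)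
    (v : Fin (n + 1) → ℂ) : Fin (n + 1) → ℂ :=
  fun j => ∑ k, D j k g * v k

/-- The Hermitian inner product `⟨v,w⟩ = ∑ₖ conj (v k) * (w k)` on `ℂ^N`. -/
def herm {N : ℕ} (v w : Fin N → ℂ) : ℂ := ∑ r, conj (v r) * w r

namespace WigAux

def e (n j : ℕ) (z₀ z₁ : ℂ) : ℂ := (Real.sqrt (n.choose j) : ℂ) * z₀ ^ j * z₁ ^ (n - j)

lemma sqrt_ne {n : ℕ} (j : Fin (n+1)) : (Real.sqrt (n.choose (j:ℕ)) : ℂ) ≠ 0 := by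
  have : 0 < n.choose (j:ℕ) := Nat.choose_pos (by omega)
  have h2 : 0 < Real.sqrt (n.choose (j:ℕ)) := Real.sqrt_pos.mpr (by exact_mod_cast this)
  exact_mod_cast h2.ne'

lemma coeff_eq {n : ℕ} (a b : Fin (n+1) → ℂ)
    (H : ∀ x : ℂ, ∑ j : Fin (n+1), a j * x ^ (j:ℕ) = ∑ j : Fin (n+1), b j * x ^ (j:ℕ)) : a = b := by
  have hp : (∑ j : Fin (n+1), Polynomial.C (a j) * Polynomial.X ^ (j:ℕ))
      = ∑ j : Fin (n+1), Polynomial.C (b j) * Polynomial.X ^ (j:ℕ) := by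
    apply Polynomial.funext
    intro x
    simpa [Polynomial.eval_finset_sum] using H x
  funext i
  have := congrArg (fun p => Polynomial.coeff p (i:ℕ)) hp
  simpa [Polynomial.finset_sum_coeff, Polynomial.coeff_X_pow, ← Fin.ext_iff] using this

lemma lin {n : ℕ} (a b : Fin (n+1) → ℂ)
    (H : ∀ z₀ z₁ : ℂ, ∑ j : Fin (n+1), e n j z₀ z₁ * a j = ∑ j : Fin (n+1), e n j z₀ z₁ * b j) :
    a = b := by
  have := coeff_eq (fun j => (Real.sqrt (n.choose (j:ℕ)) : ℂ) * a j)
    (fun j => (Real.sqrt (n.choose (j:ℕ)) : ℂ) * b j) (by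
      intro x
      have := H x 1
      simp only [e, one_pow, mul_one] at this
      simpa [mul_right_comm] using this)
  funext i
  exact mul_left_cancel₀ (sqrt_ne i) (congrFun this i)

lemma conj_e (n j : ℕ) (z₀ z₁ : ℂ) : conj (e n j z₀ z₁) = e n j (conj z₀) (conj z₁) := by
  simp [e]

lemma e_kernel (n : ℕ) (x₀ x₁ w₀ w₁ : ℂ) :
    ∑ k : Fin (n+1), e n k x₀ x₁ * e n k w₀ w₁ = (x₀ * w₀ + x₁ * w₁) ^ n := by
  rw [add_pow, Finset.sum_range]
  refine Finset.sum_congr rfl fun k _ => ?_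
  have : (Real.sqrt (n.choose (k:ℕ)) : ℂ) * (Real.sqrt (n.choose (k:ℕ)) : ℂ) = (n.choose (k:ℕ) : ℂ) := by
    rw [← Complex.ofReal_mul, Real.mul_self_sqrt (by positivity)]; simp
  rw [← this]
  simp only [e, mul_pow]; ring

lemma wig {n : ℕ} {D : Fin (n + 1) → Fin (n + 1) → SU2 → ℂ} (hD : IsWigner n D) (g : SU2)
    (k : Fin (n+1)) (z₀ z₁ : ℂ) : ∑ j : Fin (n+1), e n j z₀ z₁ * D j k g
      = e n k (conj (ga g) * z₀ + conj (gb g) * z₁) (-(gb g) * z₀ + ga g * z₁) := hD g k z₀ z₁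

lemma unit1 (g : SU2) : ga g * conj (ga g) + gb g * conj (gb g) = 1 := by
  have h1 := (Matrix.mem_unitaryGroup_iff'.mp g.1.2)
  have := congrFun (congrFun h1 0) 0
  simp [Matrix.mul_apply, Fin.sum_univ_two, Matrix.star_apply] at this
  simp only [ga, gb]
  rw [← this]; ring

lemma inv_mat (g : SU2) : (g⁻¹).1.1 = star g.1.1 := rfl

lemma star_adj (g : SU2) : star g.1.1 = Matrix.adjugate g.1.1 := by
  have h1 := (Matrix.mem_unitaryGroup_iff'.mp g.1.2)
  have hd : g.1.1.det = 1 := g.2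
  have h2 : g.1.1 * Matrix.adjugate g.1.1 = 1 := by rw [Matrix.mul_adjugate, hd, one_smul]
  calc star g.1.1 = star g.1.1 * (g.1.1 * Matrix.adjugate g.1.1) := by rw [h2, mul_one]
    _ = _ := by rw [← mul_assoc, h1, one_mul]

lemma g11 (g : SU2) : g.1.1 1 1 = conj (ga g) := by
  have := congrFun (congrFun (star_adj g) 0) 0
  simp [Matrix.adjugate_fin_two, Matrix.star_apply] at this
  simp [ga, this]

lemma g01 (g : SU2) : g.1.1 0 1 = - conj (gb g) := by
  have := congrFun (congrFun (star_adj g) 0) 1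
  simp [Matrix.adjugate_fin_two, Matrix.star_apply] at this
  simp [gb, this]

lemma ga_mul (g k : SU2) : ga (g * k) = ga g * ga k - conj (gb g) * gb k := by
  have : (g * k).1.1 = g.1.1 * k.1.1 := rfl
  rw [ga, this, Matrix.mul_apply, Fin.sum_univ_two, g01]
  simp [ga, gb]; ring

lemma gb_mul (g k : SU2) : gb (g * k) = gb g * ga k + conj (ga g) * gb k := by
  have : (g * k).1.1 = g.1.1 * k.1.1 := rfl
  rw [gb, this, Matrix.mul_apply, Fin.sum_univ_two, g11]
  simp [ga, gb]

lemma ga_inv (g : SU2) : ga g⁻¹ = conj (ga g) := by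
  rw [ga, inv_mat]; simp [Matrix.star_apply, ga]

lemma gb_inv (g : SU2) : gb g⁻¹ = - gb g := by
  rw [gb, inv_mat]; simp [Matrix.star_apply, g01]

def mk (a b : ℂ) (H : a * conj a + b * conj b = 1) : SU2 :=
  ⟨⟨h a b, by
    rw [Matrix.mem_unitaryGroup_iff]
    ext i j
    fin_cases i <;> fin_cases j <;>
      simp [h, Matrix.mul_apply, Fin.sum_univ_two, Matrix.star_apply] <;>
      first | (linear_combination H) | ring1⟩, by
    show (h a b).det = 1
    simp [h, Matrix.det_fin_two]; linear_combination H⟩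

lemma ga_mk (a b : ℂ) (H) : ga (mk a b H) = a := by simp [ga, mk, h]
lemma gb_mk (a b : ℂ) (H) : gb (mk a b H) = b := by simp [gb, mk, h]

lemma D_mul {n : ℕ} {D : Fin (n + 1) → Fin (n + 1) → SU2 → ℂ} (hD : IsWigner n D) (g g' : SU2)
    (j k : Fin (n+1)) : D j k (g * g') = ∑ i, D j i g * D i k g' := by
  refine congrFun (lin (fun j => D j k (g * g')) (fun j => ∑ i, D j i g * D i k g') ?_) j
  intro z₀ z₁
  rw [wig hD]
  have : ∑ j : Fin (n+1), e n j z₀ z₁ * ∑ i, D j i g * D i k g'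
      = ∑ i, (∑ j : Fin (n+1), e n j z₀ z₁ * D j i g) * D i k g' := by
    simp only [Finset.mul_sum, Finset.sum_mul]
    rw [Finset.sum_comm]
    simp only [mul_assoc]
  rw [this]
  simp only [wig hD]
  rw [ga_mul, gb_mul]
  congr 1 <;> simp <;> ring

lemma D_one {n : ℕ} {D : Fin (n + 1) → Fin (n + 1) → SU2 → ℂ} (hD : IsWigner n D)
    (j k : Fin (n+1)) : D j k 1 = if j = k then 1 else 0 := by
  refine congrFun (lin (fun j => D j k 1) (fun j => if j = k then 1 else 0) ?_) j
  intro z₀ z₁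
  rw [wig hD]
  have h1 : ga 1 = 1 := by simp [ga]
  have h2 : gb 1 = 0 := by simp [gb]
  simp [h1, h2]

lemma D_inv {n : ℕ} {D : Fin (n + 1) → Fin (n + 1) → SU2 → ℂ} (hD : IsWigner n D) (g : SU2)
    (j k : Fin (n+1)) : D k j g⁻¹ = conj (D j k g) := by
  have key : (fun k => conj (D j k g)) = fun k => D k j g⁻¹ := by
    apply lin
    intro w₀ w₁
    rw [wig hD]
    have h2 : (fun j => ∑ k : Fin (n+1), e n k w₀ w₁ * conj (D j k g)) = fun j : Fin (n+1) =>
        e n j (conj (ga g⁻¹) * w₀ + conj (gb g⁻¹) * w₁) (-(gb g⁻¹) * w₀ + ga g⁻¹ * w₁) := by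
      apply lin
      intro z₀ z₁
      rw [e_kernel]
      have : ∑ j : Fin (n+1), e n j z₀ z₁ * ∑ k : Fin (n+1), e n k w₀ w₁ * conj (D j k g)
          = ∑ k : Fin (n+1), conj (∑ j : Fin (n+1), e n j (conj z₀) (conj z₁) * D j k g)
             * e n k w₀ w₁ := by
        simp only [Finset.mul_sum, Finset.sum_mul, map_sum, map_mul, conj_e, Complex.conj_conj]
        rw [Finset.sum_comm]
        refine Finset.sum_congr rfl fun _ _ => Finset.sum_congr rfl fun _ _ => by ring
      rw [this]
      simp only [wig hD, conj_e, e_kernel, ga_inv, gb_inv]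
      congr 1
      simp; ring
    exact congrFun h2 j
  exact (congrFun key k).symm

lemma D_unit {n : ℕ} {D : Fin (n + 1) → Fin (n + 1) → SU2 → ℂ} (hD : IsWigner n D) (g : SU2)
    (k k' : Fin (n+1)) : ∑ j, D j k g * conj (D j k' g) = if k = k' then 1 else 0 := by
  have := D_mul hD g⁻¹ g k' k
  rw [inv_mul_cancel, D_one hD] at this
  simp only [D_inv hD] at this
  simp only [eq_comm (a := k)]
  rw [this]
  simp only [mul_comm]

lemma D_bound {n : ℕ} {D : Fin (n + 1) → Fin (n + 1) → SU2 → ℂ} (hD : IsWigner n D) (g : SU2)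
    (j k : Fin (n+1)) : ‖D j k g‖ ≤ 1 := by
  have h1 := D_unit hD g k k
  simp only [Complex.mul_conj, if_true] at h1
  have h2 : ∑ j, Complex.normSq (D j k g) = 1 := by exact_mod_cast h1
  have h3 : Complex.normSq (D j k g) ≤ 1 := by
    rw [← h2]
    exact Finset.single_le_sum (f := fun j => Complex.normSq (D j k g))
      (fun i _ => Complex.normSq_nonneg _) (Finset.mem_univ j)
  rw [Complex.normSq_eq_norm_sq] at h3
  nlinarith [norm_nonneg (D j k g)]

def PC (f : SU2 → Polynomial ℂ) : Prop := ∀ j, Continuous fun g => (f g).coeff j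

lemma PC.mul {f f' : SU2 → Polynomial ℂ} (hf : PC f) (hf' : PC f') : PC fun g => f g * f' g := by
  intro j
  simp only [Polynomial.coeff_mul]
  exact continuous_finset_sum _ fun i _ => (hf _).mul (hf' _)

lemma PC.pow {f : SU2 → Polynomial ℂ} (hf : PC f) (m : ℕ) : PC fun g => f g ^ m := by
  induction m with
  | zero => intro j; simp only [pow_zero]; exact continuous_const
  | succ m ih => simp only [pow_succ]; exact ih.mul hf

lemma PC.lin {a b : SU2 → ℂ} (ha : Continuous a) (hb : Continuous b) :
    PC fun g => Polynomial.C (a g) * Polynomial.X + Polynomial.C (b g) := by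
  intro j
  simp only [Polynomial.coeff_add, Polynomial.coeff_C_mul, Polynomial.coeff_C]
  refine (ha.mul continuous_const).add ?_
  split_ifs
  · exact hb
  · exact continuous_const

lemma ga_cont : Continuous ga := by
  unfold ga
  have : Continuous fun g : SU2 => g.1.1 := continuous_subtype_val.comp continuous_subtype_val
  exact this.matrix_elem 0 0

lemma gb_cont : Continuous gb := by
  unfold gb
  have : Continuous fun g : SU2 => g.1.1 := continuous_subtype_val.comp continuous_subtype_val
  exact this.matrix_elem 1 0

lemma D_cont {n : ℕ} {D : Fin (n + 1) → Fin (n + 1) → SU2 → ℂ} (hD : IsWigner n D)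
    (j k : Fin (n+1)) : Continuous (D j k) := by
  have hca : Continuous fun g => conj (ga g) := Complex.continuous_conj.comp ga_cont
  have hcb : Continuous fun g => conj (gb g) := Complex.continuous_conj.comp gb_cont
  have hP := ((PC.lin hca hcb).pow k).mul ((PC.lin gb_cont.neg ga_cont).pow (n - k))
  have key : ∀ g, D j k g = (Real.sqrt (n.choose (j:ℕ)) : ℂ)⁻¹ * ((Real.sqrt (n.choose (k:ℕ)) : ℂ) *
      ((Polynomial.C (conj (ga g)) * Polynomial.X + Polynomial.C (conj (gb g))) ^ (k:ℕ) *
       (Polynomial.C (- gb g) * Polynomial.X + Polynomial.C (ga g)) ^ (n - (k:ℕ))).coeff j) := by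
    intro g
    have hp : (∑ i : Fin (n+1), Polynomial.C ((Real.sqrt (n.choose (i:ℕ)) : ℂ) * D i k g)
        * Polynomial.X ^ (i:ℕ)) = Polynomial.C (Real.sqrt (n.choose (k:ℕ)) : ℂ) *
      ((Polynomial.C (conj (ga g)) * Polynomial.X + Polynomial.C (conj (gb g))) ^ (k:ℕ) *
       (Polynomial.C (- gb g) * Polynomial.X + Polynomial.C (ga g)) ^ (n - (k:ℕ))) := by
      apply Polynomial.funext
      intro x
      have := hD g k x 1
      simp only [one_pow, mul_one] at this
      simp only [Polynomial.eval_finset_sum, Polynomial.eval_mul, Polynomial.eval_C,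
        Polynomial.eval_pow, Polynomial.eval_X, Polynomial.eval_add]
      rw [← mul_assoc, ← this]
      exact Finset.sum_congr rfl fun i _ => by ring
    have := congrArg (fun p => Polynomial.coeff p (j:ℕ)) hp
    simp only [Polynomial.coeff_C_mul] at this
    rw [← this]
    rw [eq_inv_mul_iff_mul_eq₀ (sqrt_ne j)]
    simp only [Polynomial.finsetSum_coeff, Polynomial.coeff_C_mul, Polynomial.coeff_X_pow,
      ← Fin.ext_iff]
    simp
  rw [show D j k = _ from funext key]
  exact continuous_const.mul (continuous_const.mul (hP j))

section
variable {n n' : ℕ} {D : Fin (n + 1) → Fin (n + 1) → SU2 → ℂ}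
    {D' : Fin (n' + 1) → Fin (n' + 1) → SU2 → ℂ}

lemma D_zero_ne (hD : IsWigner n D) : ∃ g : SU2, ∀ k, D 0 k g ≠ 0 := by
  have H : ((3/5 : ℝ) : ℂ) * conj ((3/5 : ℝ) : ℂ) + ((4/5 : ℝ) : ℂ) * conj ((4/5 : ℝ) : ℂ) = 1 := by
    rw [Complex.conj_ofReal, Complex.conj_ofReal]; push_cast; norm_num
  obtain ⟨g, hg1, hg2⟩ : ∃ g : SU2, ga g = ((3/5 : ℝ) : ℂ) ∧ gb g = ((4/5 : ℝ) : ℂ) :=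
    ⟨mk _ _ H, ga_mk _ _ H, gb_mk _ _ H⟩
  refine ⟨g, fun k => ?_⟩
  have := wig hD g k 0 1
  rw [Fin.sum_univ_succ] at this
  simp only [e, hg1, hg2, Complex.conj_ofReal] at this
  simp at this
  rw [this]
  refine mul_ne_zero (mul_ne_zero (sqrt_ne k) ?_) ?_ <;> exact pow_ne_zero _ (by norm_num)

lemma D_diag (hD : IsWigner n D) (u : ℂ) (H) (j k : Fin (n+1)) :
    D j k (mk u 0 H) = if j = k then conj u ^ (k:ℕ) * u ^ (n - (k:ℕ)) else 0 := by
  refine congrFun (lin (fun j => D j k (mk u 0 H))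
    (fun j => if j = k then conj u ^ (k:ℕ) * u ^ (n - (k:ℕ)) else 0) ?_) j
  intro z₀ z₁
  rw [wig hD, ga_mk, gb_mk]
  simp [e, mul_pow]; ring

variable (μ : Measure SU2) [μ.IsHaarMeasure] [IsProbabilityMeasure μ]

lemma integ (hD : IsWigner n D) (hD' : IsWigner n' D') (j k j' k') :
    Integrable (fun g => D j k g * conj (D' j' k' g)) μ := by
  have hc : Continuous (fun g => D j k g * conj (D' j' k' g)) :=
    (D_cont hD j k).mul (Complex.continuous_conj.comp (D_cont hD' j' k'))
  refine Integrable.of_bound hc.measurable.aestronglyMeasurable 1 (Filter.Eventually.of_forall ?_)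
  intro g
  rw [norm_mul, RCLike.norm_conj]
  exact mul_le_one₀ (D_bound hD g _ _) (norm_nonneg _) (D_bound hD' g _ _)

lemma D_inv_mul (hD : IsWigner n D) (a g : SU2) (j k : Fin (n+1)) :
    ∑ i, D i k g * conj (D i j a) = D j k (a⁻¹ * g) := by
  rw [D_mul hD]
  simp only [D_inv hD, mul_comm]

lemma intertwine (hD : IsWigner n D) (hD' : IsWigner n' D') (a : SU2) (j k j' k') :
    ∑ i, D j i a * (∫ g, D i k g * conj (D' j' k' g) ∂μ)
      = ∑ i', (∫ g, D j k g * conj (D' i' k' g) ∂μ) * D' i' j' a := by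
  have h1 : ∑ i, D j i a * (∫ g, D i k g * conj (D' j' k' g) ∂μ)
      = ∫ g, D j k (a * g) * conj (D' j' k' g) ∂μ := by
    simp only [← integral_const_mul]
    rw [← integral_finset_sum _ fun i _ => (integ μ hD hD' _ _ _ _).const_mul _]
    congr 1; funext g
    rw [D_mul hD, Finset.sum_mul]
    simp only [mul_assoc]
  have h2 : ∑ i', (∫ g, D j k g * conj (D' i' k' g) ∂μ) * D' i' j' a
      = ∫ g, D j k g * conj (D' j' k' (a⁻¹ * g)) ∂μ := by
    simp only [← integral_mul_const]
    rw [← integral_finset_sum _ fun i _ => (integ μ hD hD' _ _ _ _).mul_const _]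
    congr 1; funext g
    rw [← D_inv_mul hD', map_sum, Finset.mul_sum]
    refine Finset.sum_congr rfl fun i _ => by simp; ring
  rw [h1, h2, ← integral_mul_left_eq_self (fun g => D j k g * conj (D' j' k' (a⁻¹ * g))) a]
  simp

lemma weight (hD : IsWigner n D) (hD' : IsWigner n' D') (j k : Fin (n+1)) (j' k' : Fin (n'+1))
    (hne : (n:ℤ) - 2 * (j:ℕ) ≠ n' - 2 * (j':ℕ)) :
    ∫ g, D j k g * conj (D' j' k' g) ∂μ = 0 := by
  have hc : conj (Complex.exp I) = Complex.exp (-I) := by rw [← Complex.exp_conj]; simp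
  have H : Complex.exp I * conj (Complex.exp I) + 0 * conj 0 = 1 := by
    rw [hc, ← Complex.exp_add]; simp
  have := intertwine μ hD hD' (mk _ _ H) j k j' k'
  simp only [D_diag hD, D_diag hD'] at this
  simp only [ite_mul, mul_ite, zero_mul, mul_zero, Finset.sum_ite_eq, Finset.sum_ite_eq',
    Finset.mem_univ, if_true] at this
  have hpow : ∀ {m : ℕ} (i : Fin (m+1)), conj (Complex.exp I) ^ (i:ℕ) * Complex.exp I ^ (m - (i:ℕ))
      = Complex.exp (((m:ℂ) - 2 * (i:ℕ)) * I) := by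
    intro m i
    rw [hc, ← Complex.exp_nat_mul, ← Complex.exp_nat_mul, ← Complex.exp_add,
      Nat.cast_sub (by omega)]
    congr 1; ring
  rw [hpow, hpow] at this
  by_contra hI
  rw [mul_comm] at this
  have h3 := mul_left_cancel₀ hI this
  rw [Complex.exp_eq_exp_iff_exists_int] at h3
  obtain ⟨p, hp⟩ := h3
  have h4 : ((n:ℂ) - 2 * (j:ℕ)) = (n':ℂ) - 2 * (j':ℕ) + p * (2 * Real.pi) :=
    mul_right_cancel₀ Complex.I_ne_zero (by rw [hp]; ring)
  have h5 : ((n:ℝ) - 2 * (j:ℕ)) = (n':ℝ) - 2 * (j':ℕ) + p * (2 * Real.pi) := by exact_mod_cast h4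
  have hp0 : p ≠ 0 := by
    rintro rfl
    apply hne
    simp at h5
    exact_mod_cast h5
  apply irrational_pi
  refine ⟨(((n:ℚ) - 2 * (j:ℕ)) - ((n':ℚ) - 2 * (j':ℕ))) / (2 * p), ?_⟩
  have hp0' : (p:ℝ) ≠ 0 := by exact_mod_cast hp0
  push_cast
  rw [h5]
  field_simp
  ring

lemma lt_case (hD : IsWigner n D) (hD' : IsWigner n' D') (hlt : n' < n) (j k : Fin (n+1))
    (j' k' : Fin (n'+1)) :
    ∫ g, D j k g * conj (D' j' k' g) ∂μ = 0 := by
  by_cases hw : (n:ℤ) - 2 * (j:ℕ) = n' - 2 * (j':ℕ)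
  swap
  · exact weight μ hD hD' _ _ _ _ hw
  obtain ⟨a, ha⟩ := D_zero_ne hD
  have := intertwine μ hD hD' a 0 k j' k'
  rw [Finset.sum_eq_single j, Finset.sum_eq_zero] at this
  · exact (mul_eq_zero.mp this).resolve_left (ha j)
  · intro i _
    rw [weight μ hD hD', zero_mul]
    simp only [Fin.val_zero]; omega
  · intro i _ hi
    rw [weight μ hD hD', mul_zero]
    have : (i:ℕ) ≠ j := fun h => hi (Fin.ext h)
    omega
  · simp

lemma eq_case (hD : IsWigner n D) (j k k') :
    ∫ g, D j k g * conj (D j k' g) ∂μ = ∫ g, D 0 k g * conj (D 0 k' g) ∂μ := by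
  obtain ⟨a, ha⟩ := D_zero_ne hD
  have := intertwine μ hD hD a 0 k j k'
  rw [Finset.sum_eq_single j, Finset.sum_eq_single 0, mul_comm] at this
  · exact mul_right_cancel₀ (ha j) this
  · intro i _ hi
    rw [weight μ hD hD, zero_mul]
    have : (i:ℕ) ≠ (0 : Fin (n+1)) := fun h => hi (Fin.ext h)
    omega
  · simp
  · intro i _ hi
    rw [weight μ hD hD, mul_zero]
    have : (i:ℕ) ≠ j := fun h => hi (Fin.ext h)
    omega
  · simp

lemma eq_case' (hD : IsWigner n D) (j k k') :
    ∫ g, D j k g * conj (D j k' g) ∂μ = if k = k' then ((n:ℂ)+1)⁻¹ else 0 := by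
  have h1 : ∑ i, ∫ g, D i k g * conj (D i k' g) ∂μ = if k = k' then 1 else 0 := by
    rw [← integral_finset_sum _ fun i _ => integ μ hD hD _ _ _ _]
    simp only [D_unit hD]
    simp
  rw [Finset.sum_congr rfl fun i _ => (eq_case μ hD i k k').trans (eq_case μ hD j k k').symm] at h1
  simp only [Finset.sum_const, Finset.card_univ, Fintype.card_fin, nsmul_eq_mul] at h1
  have hn : ((n:ℂ)+1) ≠ 0 := by exact_mod_cast Nat.succ_ne_zero n
  push_cast at h1
  rw [← mul_right_inj' hn, h1]
  split_ifs <;> simp [hn]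

end

end WigAux

/-- Schur orthogonality for Wigner functions:
`∫ D^ℓ_{m,s} conj (D^{ℓ'}_{m',s'}) dμ = δ_{ℓℓ'} δ_{mm'} δ_{ss'} / (2ℓ+1)`. -/
theorem wigner_schur_orthogonality (μ : Measure SU2) [μ.IsHaarMeasure] [IsProbabilityMeasure μ]
    (n n' : ℕ) (D : Fin (n + 1) → Fin (n + 1) → SU2 → ℂ)
    (D' : Fin (n' + 1) → Fin (n' + 1) → SU2 → ℂ)
    (hD : IsWigner n D) (hD' : IsWigner n' D')
    (j k : Fin (n + 1)) (j' k' : Fin (n' + 1)) :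
    ∫ g, D j k g * conj (D' j' k' g) ∂μ
      = if n = n' ∧ (j : ℕ) = (j' : ℕ) ∧ (k : ℕ) = (k' : ℕ) then ((n : ℂ) + 1)⁻¹ else 0 := by
  by_cases hn : n = n'
  · subst hn
    have hDD : D = D' := by
      funext a b g
      refine congrFun (WigAux.lin (fun a => D a b g) (fun a => D' a b g) ?_) a
      intro z₀ z₁
      rw [WigAux.wig hD, WigAux.wig hD']
    subst hDD
    by_cases hj : j = j'
    · subst hj
      rw [WigAux.eq_case' μ hD]
      simp [Fin.ext_iff]
    · have hj' : (j:ℕ) ≠ j' := fun h => hj (Fin.ext h)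
      rw [WigAux.weight μ hD hD' _ _ _ _ (by omega), if_neg (by tauto)]
  · rw [if_neg (by tauto)]
    rcases lt_or_gt_of_ne hn with h1 | h1
    · have h2 := WigAux.lt_case μ hD' hD h1 j' k' j k
      have h3 := congrArg conj h2
      rw [← integral_conj] at h3
      simpa [mul_comm] using h3
    · exact WigAux.lt_case μ hD hD' h1 j k j' k'
end
end

section
/- Schur orthogonality in vector form: for all ℓ, ℓ' with 2ℓ, 2ℓ' ∈ ℕ, all v, w ∈ ℂ^{2ℓ+1} and all v', w' ∈ ℂ^{2ℓ'+1}, one has ∫_{SU(2)} conj(⟨D^ℓ(g) v, w⟩) · ⟨D^{ℓ'}(g) v', w'⟩ dμ(g) = δ_{ℓ,ℓ'} · conj(⟨v, v'⟩) · ⟨w, w'⟩ / (2ℓ+1). -/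
open scoped ComplexConjugate Matrix
open MeasureTheory Complex

noncomputable section

def wE (n : ℕ) (j : Fin (n + 1)) (z₀ z₁ : ℂ) : ℂ := (Real.sqrt (n.choose (j : ℕ)) : ℂ) * z₀ ^ (j : ℕ) * z₁ ^ (n - (j : ℕ))

lemma sqrt_choose_ne {n : ℕ} (j : Fin (n + 1)) : (Real.sqrt (n.choose (j : ℕ)) : ℂ) ≠ 0 := by
  have : 0 < n.choose (j : ℕ) := Nat.choose_pos (Nat.lt_succ_iff.mp j.2)
  have h2 : 0 < Real.sqrt (n.choose (j : ℕ)) := Real.sqrt_pos.mpr (by exact_mod_cast this)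
  exact_mod_cast h2.ne'

lemma sqrt_choose_sq (n j : ℕ) :
    (Real.sqrt (n.choose j) : ℂ) * (Real.sqrt (n.choose j) : ℂ) = (n.choose j : ℂ) := by
  rw [← Complex.ofReal_mul, Real.mul_self_sqrt (by positivity)]
  simp

lemma uniq_pow {n : ℕ} (a : Fin (n + 1) → ℂ) (ha : ∀ z : ℂ, ∑ j, a j * z ^ (j : ℕ) = 0) :
    a = 0 := by
  have hinj : Function.Injective (fun i : Fin (n + 1) => ((i : ℕ) : ℂ)) := by
    intro i j hij
    exact Fin.ext (by simpa using hij)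
  exact Matrix.eq_zero_of_forall_index_sum_mul_pow_eq_zero hinj (fun i => ha _)

lemma uniq1 {n : ℕ} (a : Fin (n + 1) → ℂ) (ha : ∀ z₀ z₁ : ℂ, ∑ j, wE n j z₀ z₁ * a j = 0) :
    a = 0 := by
  have := uniq_pow (fun j => (Real.sqrt (n.choose (j : ℕ)) : ℂ) * a j) (fun z => by
    rw [← ha z 1]
    refine Finset.sum_congr rfl fun j _ => ?_
    simp only [wE, one_pow]; ring)
  funext j
  have h2 := congrFun this j
  simpa [sqrt_choose_ne j] using h2

lemma uniq1' {n : ℕ} (a : Fin (n + 1) → ℂ)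
    (ha : ∀ z₀ z₁ : ℂ, ∑ j, conj (wE n j z₀ z₁) * a j = 0) : a = 0 := by
  have := uniq1 (fun j => conj (a j)) (fun z₀ z₁ => by
    have := congrArg conj (ha z₀ z₁)
    simpa using this)
  funext j
  simpa using congrFun this j

def wG {n n' : ℕ} (M : Fin (n + 1) → Fin (n' + 1) → ℂ) (z₀ z₁ w₀ w₁ : ℂ) : ℂ :=
  ∑ j, wE n j z₀ z₁ * ∑ j', conj (wE n' j' w₀ w₁) * M j j'

lemma uniq2 {n n' : ℕ} (M N : Fin (n + 1) → Fin (n' + 1) → ℂ)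
    (hM : ∀ z₀ z₁ w₀ w₁ : ℂ, wG M z₀ z₁ w₀ w₁ = wG N z₀ z₁ w₀ w₁) : M = N := by
  have h1 : ∀ w₀ w₁ : ℂ, (fun j => ∑ j', conj (wE n' j' w₀ w₁) * (M j j' - N j j')) = 0 := by
    intro w₀ w₁
    apply uniq1
    intro z₀ z₁
    have := sub_eq_zero.mpr (hM z₀ z₁ w₀ w₁)
    rw [← this]
    simp only [wG, Finset.sum_sub_distrib, mul_sub]
  funext j j'
  have h2 := uniq1' (fun j' => M j j' - N j j') (fun w₀ w₁ => congrFun (h1 w₀ w₁) j)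
  exact sub_eq_zero.mp (congrFun h2 j')

lemma wE_kernel (n : ℕ) (z₀ z₁ w₀ w₁ : ℂ) :
    ∑ j : Fin (n + 1), wE n j z₀ z₁ * conj (wE n j w₀ w₁)
      = (z₀ * conj w₀ + z₁ * conj w₁) ^ n := by
  rw [add_pow, ← Fin.sum_univ_eq_sum_range
    (fun m => (z₀ * conj w₀) ^ m * (z₁ * conj w₁) ^ (n - m) * (n.choose m : ℂ)) (n + 1)]
  refine Finset.sum_congr rfl fun j _ => ?_
  rw [← sqrt_choose_sq]
  simp only [wE, map_mul, map_pow, Complex.conj_ofReal, mul_pow]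
  ring

lemma wG_delta (n : ℕ) (c z₀ z₁ w₀ w₁ : ℂ) :
    wG (fun j j' : Fin (n + 1) => if j = j' then c else 0) z₀ z₁ w₀ w₁
      = c * (z₀ * conj w₀ + z₁ * conj w₁) ^ n := by
  rw [← wE_kernel, Finset.mul_sum]
  unfold wG
  refine Finset.sum_congr rfl fun j _ => ?_
  simp
  ring

lemma wE_zero_right (n : ℕ) (j : Fin (n + 1)) (r : ℂ) :
    wE n j r 0 = if j = Fin.last n then r ^ n else 0 := by
  split_ifs with hj
  · subst hj; simp [wE]
  · have h1 : (j : ℕ) ≠ n := fun h2 => hj (Fin.ext h2)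
    have h3 : n - (j : ℕ) ≠ 0 := by omega
    simp [wE, h3]

lemma wG_e0 {n n' : ℕ} (M : Fin (n + 1) → Fin (n' + 1) → ℂ) (z₀ z₁ r : ℂ) :
    wG M z₀ z₁ r 0 = conj r ^ n' * ∑ j, wE n j z₀ z₁ * M j (Fin.last n') := by
  simp only [wG, wE_zero_right, Finset.mul_sum]
  refine Finset.sum_congr rfl fun j _ => ?_
  rw [Finset.sum_eq_single (Fin.last n')]
  · simp; ring
  · intro b _ hb; simp [hb]
  · simp

lemma inv_last {n n' : ℕ} (hn : n ≤ n') (M : Fin (n + 1) → Fin (n' + 1) → ℂ)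
    (hinv : ∀ a b : ℂ, a * conj a + b * conj b = 1 → ∀ z₀ z₁ w₀ w₁ : ℂ,
      wG M (a * z₀ + b * z₁) (-conj b * z₀ + conj a * z₁)
        (a * w₀ + b * w₁) (-conj b * w₀ + conj a * w₁) = wG M z₀ z₁ w₀ w₁)
    (j : Fin (n + 1)) (hj : ¬ (n = n' ∧ j = Fin.last n)) : M j (Fin.last n') = 0 := by
  have hd : (j : ℕ) < (n - j) + n' := by
    have := j.2
    by_contra h1
    exact hj ⟨by omega, Fin.ext (by simp; omega)⟩
  obtain ⟨d, hd0, hd⟩ : ∃ d : ℕ, d ≠ 0 ∧ (n - j) + n' = j + d :=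
    ⟨(n - j) + n' - j, by omega, by omega⟩
  set a : ℂ := Complex.exp (((Real.pi / d : ℝ) : ℂ) * I) with ha
  have hac : a * conj a = 1 := by
    rw [Complex.mul_conj, Complex.normSq_eq_norm_sq, ha, Complex.norm_exp_ofReal_mul_I]; simp
  have had : a ^ d = -1 := by
    rw [ha, ← Complex.exp_nat_mul, ← Complex.exp_pi_mul_I]
    congr 1
    push_cast
    field_simp
  have key := uniq1 (fun i : Fin (n + 1) =>
      (a ^ (i : ℕ) * conj a ^ (n - i) * conj a ^ n' - 1) * M i (Fin.last n')) (fun z₀ z₁ => by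
    have h1 := hinv a 0 (by simpa using hac) z₀ z₁ 1 0
    simp only [zero_mul, add_zero, map_zero, neg_zero, mul_zero, mul_one, zero_add] at h1
    rw [wG_e0, wG_e0, map_one, one_pow, one_mul, ← sub_eq_zero, Finset.mul_sum,
      ← Finset.sum_sub_distrib] at h1
    rw [← h1]
    refine Finset.sum_congr rfl fun i _ => ?_
    simp only [wE, mul_pow]
    ring)
  have h2 := congrFun key j
  simp only [Pi.zero_apply] at h2
  have h3 : a ^ (j : ℕ) * conj a ^ (n - j) * conj a ^ n' = -1 := by
    rw [mul_assoc, ← pow_add, hd, pow_add, ← mul_assoc, ← mul_pow, hac, one_pow, one_mul,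
      ← map_pow, had]
    simp
  rw [h3] at h2
  have : (-1 - 1 : ℂ) ≠ 0 := by norm_num
  exact (mul_eq_zero.mp h2).resolve_left this

lemma inv_form {n n' : ℕ} (hn : n ≤ n') (M : Fin (n + 1) → Fin (n' + 1) → ℂ)
    (hinv : ∀ a b : ℂ, a * conj a + b * conj b = 1 → ∀ z₀ z₁ w₀ w₁ : ℂ,
      wG M (a * z₀ + b * z₁) (-conj b * z₀ + conj a * z₁)
        (a * w₀ + b * w₁) (-conj b * w₀ + conj a * w₁) = wG M z₀ z₁ w₀ w₁)
    (z₀ z₁ w₀ w₁ : ℂ) (hw : w₀ * conj w₀ + w₁ * conj w₁ ≠ 0) :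
    ∃ a b r : ℂ, r ≠ 0 ∧ conj r * a = conj w₀ ∧ conj r * b = conj w₁ ∧
    wG M z₀ z₁ w₀ w₁ = conj r ^ n' * ∑ j, wE n j (a * z₀ + b * z₁) (-conj b * z₀ + conj a * z₁)
      * M j (Fin.last n') := by
  set R : ℝ := Real.sqrt (Complex.normSq w₀ + Complex.normSq w₁) with hR
  have h0 : (0 : ℝ) ≤ Complex.normSq w₀ + Complex.normSq w₁ :=
    add_nonneg (Complex.normSq_nonneg _) (Complex.normSq_nonneg _)
  have hRR : (R : ℂ) * R = w₀ * conj w₀ + w₁ * conj w₁ := by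
    rw [← Complex.ofReal_mul, hR, Real.mul_self_sqrt h0, Complex.mul_conj, Complex.mul_conj]
    simp
  have hR0 : (R : ℂ) ≠ 0 := by
    intro h1; rw [h1] at hRR; exact hw (by rw [← hRR]; simp)
  refine ⟨conj w₀ / R, conj w₁ / R, R, hR0, ?_, ?_, ?_⟩
  · rw [Complex.conj_ofReal]; field_simp
  · rw [Complex.conj_ofReal]; field_simp
  · rw [← wG_e0, ← hinv (conj w₀ / R) (conj w₁ / R) ?_ z₀ z₁ w₀ w₁]
    · congr 1
      · field_simp
        linear_combination -hRR
      · simp only [map_div₀, Complex.conj_conj, Complex.conj_ofReal]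
        field_simp
        ring
    · simp only [map_div₀, Complex.conj_conj, Complex.conj_ofReal]
      field_simp
      linear_combination -hRR

lemma wG_zero_right {n n' : ℕ} (hn : n' ≠ 0) (M : Fin (n + 1) → Fin (n' + 1) → ℂ) (z₀ z₁ : ℂ) :
    wG M z₀ z₁ 0 0 = 0 := by
  rw [wG_e0]; simp [hn]

lemma inv_ne {n n' : ℕ} (hn : n < n') (M : Fin (n + 1) → Fin (n' + 1) → ℂ)
    (hinv : ∀ a b : ℂ, a * conj a + b * conj b = 1 → ∀ z₀ z₁ w₀ w₁ : ℂ,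
      wG M (a * z₀ + b * z₁) (-conj b * z₀ + conj a * z₁)
        (a * w₀ + b * w₁) (-conj b * w₀ + conj a * w₁) = wG M z₀ z₁ w₀ w₁) : M = 0 := by
  apply uniq2
  intro z₀ z₁ w₀ w₁
  have h0 : wG (0 : Fin (n + 1) → Fin (n' + 1) → ℂ) z₀ z₁ w₀ w₁ = 0 := by simp [wG]
  rw [h0]
  by_cases hw : w₀ * conj w₀ + w₁ * conj w₁ = 0
  · have h1 : Complex.normSq w₀ + Complex.normSq w₁ = 0 := by
      rw [Complex.mul_conj, Complex.mul_conj] at hw; exact_mod_cast hw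
    have h2 := Complex.normSq_nonneg w₀
    have h3 := Complex.normSq_nonneg w₁
    have e0 : w₀ = 0 := Complex.normSq_eq_zero.mp (by linarith)
    have e1 : w₁ = 0 := Complex.normSq_eq_zero.mp (by linarith)
    subst e0 e1
    exact wG_zero_right (by omega) M z₀ z₁
  · obtain ⟨a, b, r, -, -, -, h1⟩ := inv_form hn.le M hinv z₀ z₁ w₀ w₁ hw
    rw [h1]
    have : ∀ j, M j (Fin.last n') = 0 := fun j => inv_last hn.le M hinv j (by omega)
    simp [this]

lemma inv_eq {n : ℕ} (M : Fin (n + 1) → Fin (n + 1) → ℂ)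
    (hinv : ∀ a b : ℂ, a * conj a + b * conj b = 1 → ∀ z₀ z₁ w₀ w₁ : ℂ,
      wG M (a * z₀ + b * z₁) (-conj b * z₀ + conj a * z₁)
        (a * w₀ + b * w₁) (-conj b * w₀ + conj a * w₁) = wG M z₀ z₁ w₀ w₁) :
    ∃ c : ℂ, M = fun j j' => if j = j' then c else 0 := by
  refine ⟨M (Fin.last n) (Fin.last n), ?_⟩
  have hl : ∀ z₀ z₁ : ℂ, ∑ j, wE n j z₀ z₁ * M j (Fin.last n)
      = z₀ ^ n * M (Fin.last n) (Fin.last n) := by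
    intro z₀ z₁
    rw [Finset.sum_eq_single (Fin.last n)]
    · simp [wE]
    · intro j _ hj
      rw [inv_last le_rfl M hinv j (by simp [hj]), mul_zero]
    · simp
  apply uniq2
  intro z₀ z₁ w₀ w₁
  rw [wG_delta]
  by_cases hw : w₀ * conj w₀ + w₁ * conj w₁ = 0
  · have h1 : Complex.normSq w₀ + Complex.normSq w₁ = 0 := by
      rw [Complex.mul_conj, Complex.mul_conj] at hw; exact_mod_cast hw
    have h2 := Complex.normSq_nonneg w₀
    have h3 := Complex.normSq_nonneg w₁
    have e0 : w₀ = 0 := Complex.normSq_eq_zero.mp (by linarith)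
    have e1 : w₁ = 0 := Complex.normSq_eq_zero.mp (by linarith)
    subst e0 e1
    rw [wG_e0, hl]
    by_cases hn : n = 0
    · subst hn; simp
    · simp [hn]
  · obtain ⟨a, b, r, -, ha, hb, h1⟩ := inv_form le_rfl M hinv z₀ z₁ w₀ w₁ hw
    rw [h1, hl, ← ha, ← hb, ← mul_assoc, ← mul_pow, mul_comm]
    congr 2
    ring

lemma SU2_entries (g : SU2) : g.1.1 0 1 = -conj (gb g) ∧ g.1.1 1 1 = conj (ga g) ∧
    ga g * conj (ga g) + gb g * conj (gb g) = 1 := by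
  have hdet : g.1.1.det = 1 := g.2
  have hu : star g.1.1 * g.1.1 = 1 := Matrix.mem_unitaryGroup_iff'.mp g.1.2
  have hs : star g.1.1 = g.1.1.adjugate := by
    have h1 : g.1.1 * g.1.1.adjugate = 1 := by rw [Matrix.mul_adjugate, hdet, one_smul]
    calc star g.1.1 = star g.1.1 * (g.1.1 * g.1.1.adjugate) := by rw [h1, mul_one]
      _ = _ := by rw [← mul_assoc, hu, one_mul]
  rw [Matrix.adjugate_fin_two] at hs
  have h00 := congrFun (congrFun hs 0) 0
  have h01 := congrFun (congrFun hs 0) 1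
  have u00 := congrFun (congrFun hu 0) 0
  simp [Matrix.star_apply, Matrix.mul_apply] at h00 h01 u00
  refine ⟨?_, ?_, ?_⟩
  · rw [gb, h01, neg_neg]
  · rw [ga, h00]
  · rw [← u00, ga, gb]; ring

lemma ga_mul (x g : SU2) : ga (x * g) = ga x * ga g - conj (gb x) * gb g := by
  have h1 := (SU2_entries x).1
  have : ga (x * g) = x.1.1 0 0 * g.1.1 0 0 + x.1.1 0 1 * g.1.1 1 0 := by
    simp [ga, Matrix.mul_apply]
  rw [this, h1, ga, ga, gb, gb]; ring

lemma gb_mul (x g : SU2) : gb (x * g) = gb x * ga g + conj (ga x) * gb g := by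
  have h1 := (SU2_entries x).2.1
  have : gb (x * g) = x.1.1 1 0 * g.1.1 0 0 + x.1.1 1 1 * g.1.1 1 0 := by
    simp [gb, Matrix.mul_apply]
  rw [this, h1, ga, ga, gb, gb]

lemma exists_SU2 (a b : ℂ) (hab : a * conj a + b * conj b = 1) :
    ∃ x : SU2, ga x = a ∧ gb x = b := by
  have hu : h a b ∈ Matrix.unitaryGroup (Fin 2) ℂ := by
    rw [Matrix.mem_unitaryGroup_iff]
    ext i j
    fin_cases i <;> fin_cases j <;>
      simp [h, Matrix.mul_apply, Matrix.star_apply, Matrix.vecMul, Fin.sum_univ_two] <;>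
      first | linear_combination hab | ring
  refine ⟨⟨⟨h a b, hu⟩, ?_⟩, ?_, ?_⟩
  · change (h a b).det = 1
    rw [h, Matrix.det_fin_two_of]
    linear_combination hab
  · simp [ga, h]
  · simp [gb, h]

lemma continuous_ga : Continuous ga := by
  unfold ga
  exact (continuous_subtype_val.comp continuous_subtype_val).matrix_elem 0 0

lemma continuous_gb : Continuous gb := by
  unfold gb
  exact (continuous_subtype_val.comp continuous_subtype_val).matrix_elem 1 0

def wf (n : ℕ) (k : Fin (n + 1)) (g : SU2) (z₀ z₁ : ℂ) : ℂ :=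
  wE n k (conj (ga g) * z₀ + conj (gb g) * z₁) (-(gb g) * z₀ + ga g * z₁)

lemma wf_mul (n : ℕ) (k : Fin (n + 1)) (x g : SU2) (z₀ z₁ : ℂ) :
    wf n k (x * g) z₀ z₁ =
      wf n k g (conj (ga x) * z₀ + conj (gb x) * z₁) (-(gb x) * z₀ + ga x * z₁) := by
  unfold wf
  rw [ga_mul, gb_mul]
  congr 1
  · simp; ring
  · ring

lemma wigner_sum {n : ℕ} {D : Fin (n + 1) → Fin (n + 1) → SU2 → ℂ} (hD : IsWigner n D)
    (g : SU2) (k : Fin (n + 1)) (z₀ z₁ : ℂ) :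
    ∑ j : Fin (n + 1), wE n j z₀ z₁ * D j k g = wf n k g z₀ z₁ := hD g k z₀ z₁

lemma wigner_unique {n : ℕ} {D D' : Fin (n + 1) → Fin (n + 1) → SU2 → ℂ} (hD : IsWigner n D)
    (hD' : IsWigner n D') : D = D' := by
  funext j k g
  have := uniq1 (fun j => D j k g - D' j k g) (fun z₀ z₁ => by
    simp only [mul_sub, Finset.sum_sub_distrib, wigner_sum hD, wigner_sum hD', sub_self])
  exact sub_eq_zero.mp (congrFun this j)

lemma wigner_continuous {n : ℕ} {D : Fin (n + 1) → Fin (n + 1) → SU2 → ℂ} (hD : IsWigner n D)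
    (j k : Fin (n + 1)) : Continuous (D j k) := by
  set V : Matrix (Fin (n + 1)) (Fin (n + 1)) ℂ :=
    Matrix.vandermonde (fun i : Fin (n + 1) => ((i : ℕ) : ℂ)) with hV
  have hdet : IsUnit V.det := by
    rw [isUnit_iff_ne_zero, hV, Matrix.det_vandermonde_ne_zero_iff]
    intro i j hij
    exact Fin.ext (by simpa using hij)
  have h1 : ∀ g, V *ᵥ (fun j => (Real.sqrt (n.choose (j : ℕ)) : ℂ) * D j k g)
      = fun i : Fin (n + 1) => wf n k g ((i : ℕ) : ℂ) 1 := by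
    intro g
    funext i
    rw [← wigner_sum hD]
    simp only [Matrix.mulVec, dotProduct, hV, Matrix.vandermonde_apply, wE, one_pow]
    refine Finset.sum_congr rfl fun j _ => ?_
    ring
  have h2 : ∀ g, D j k g = (Real.sqrt (n.choose (j : ℕ)) : ℂ)⁻¹ *
      (V⁻¹ *ᵥ (fun i : Fin (n + 1) => wf n k g ((i : ℕ) : ℂ) 1)) j := by
    intro g
    rw [← h1 g, Matrix.mulVec_mulVec, Matrix.nonsing_inv_mul V hdet, Matrix.one_mulVec,
      inv_mul_cancel_left₀ (sqrt_choose_ne j)]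
  rw [show D j k = _ from funext h2]
  have := continuous_ga
  have := continuous_gb
  simp only [Matrix.mulVec, dotProduct, wf, wE]
  fun_prop

lemma wigner_unitary {n : ℕ} {D : Fin (n + 1) → Fin (n + 1) → SU2 → ℂ} (hD : IsWigner n D)
    (g : SU2) : (fun j j' => ∑ k, D j k g * conj (D j' k g))
      = fun j j' : Fin (n + 1) => if j = j' then (1 : ℂ) else 0 := by
  apply uniq2
  intro z₀ z₁ w₀ w₁
  rw [wG_delta, one_mul]
  have h1 : wG (fun j j' => ∑ k, D j k g * conj (D j' k g)) z₀ z₁ w₀ w₁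
      = ∑ k : Fin (n + 1), wf n k g z₀ z₁ * conj (wf n k g w₀ w₁) := by
    simp only [← wigner_sum hD, map_sum, map_mul, Finset.sum_mul_sum]
    unfold wG
    rw [Finset.sum_comm]
    refine Finset.sum_congr rfl fun j _ => ?_
    rw [Finset.sum_comm, Finset.mul_sum]
    refine Finset.sum_congr rfl fun j' _ => ?_
    rw [Finset.mul_sum, Finset.mul_sum]
    refine Finset.sum_congr rfl fun k _ => ?_
    ring
  rw [h1]
  simp only [wf, wE_kernel]
  congr 1
  have h2 := (SU2_entries g).2.2
  simp only [map_add, map_mul, map_neg, Complex.conj_conj]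
  linear_combination (z₀ * conj w₀ + z₁ * conj w₁) * h2

lemma wigner_unitary' {n : ℕ} {D : Fin (n + 1) → Fin (n + 1) → SU2 → ℂ} (hD : IsWigner n D)
    (g : SU2) (k k' : Fin (n + 1)) : ∑ j, D j k g * conj (D j k' g) = if k = k' then 1 else 0 := by
  set A : Matrix (Fin (n + 1)) (Fin (n + 1)) ℂ := Matrix.of (fun j k => D j k g) with hA
  have h1 : A * Aᴴ = 1 := by
    ext j j'
    have := congrFun (congrFun (wigner_unitary hD g) j) j'
    simpa [Matrix.mul_apply, Matrix.one_apply, hA] using this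
  have h2 : Aᴴ * A = 1 := mul_eq_one_comm.mp h1
  have h3 := congrFun (congrFun h2 k') k
  simp only [Matrix.mul_apply, Matrix.conjTranspose_apply, Matrix.one_apply, hA, Matrix.of_apply] at h3
  simp only [eq_comm (a := k)]
  rw [← h3]
  refine Finset.sum_congr rfl fun j _ => ?_
  rw [mul_comm]; rfl

lemma wigner_bound {n : ℕ} {D : Fin (n + 1) → Fin (n + 1) → SU2 → ℂ} (hD : IsWigner n D)
    (g : SU2) (j k : Fin (n + 1)) : ‖D j k g‖ ≤ 1 := by
  have h1 := wigner_unitary' hD g k k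
  simp only [Complex.mul_conj, if_true] at h1
  have h2 : ∑ j, Complex.normSq (D j k g) = 1 := by exact_mod_cast h1
  have h3 : Complex.normSq (D j k g) ≤ 1 := by
    rw [← h2]
    exact Finset.single_le_sum (f := fun j => Complex.normSq (D j k g))
      (fun i _ => Complex.normSq_nonneg _) (Finset.mem_univ j)
  rw [Complex.normSq_eq_norm_sq] at h3
  exact (sq_le_one_iff₀ (norm_nonneg _)).mp h3

lemma wigner_integrable (μ : Measure SU2) [IsProbabilityMeasure μ] {n n' : ℕ}
    {D : Fin (n + 1) → Fin (n + 1) → SU2 → ℂ} {D' : Fin (n' + 1) → Fin (n' + 1) → SU2 → ℂ}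
    (hD : IsWigner n D) (hD' : IsWigner n' D') (j k : Fin (n + 1)) (j' k' : Fin (n' + 1)) :
    Integrable (fun g => D j k g * conj (D' j' k' g)) μ := by
  refine Integrable.of_bound (C := 1) ?_ (Filter.Eventually.of_forall fun g => ?_)
  · exact ((wigner_continuous hD j k).mul
      (Complex.continuous_conj.comp (wigner_continuous hD' j' k'))).aestronglyMeasurable
  · rw [norm_mul, RCLike.norm_conj]
    exact mul_le_one₀ (wigner_bound hD g j k) (norm_nonneg _) (wigner_bound hD' g j' k')

lemma wigner_inv (μ : Measure SU2) [μ.IsHaarMeasure] [IsProbabilityMeasure μ] {n n' : ℕ}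
    {D : Fin (n + 1) → Fin (n + 1) → SU2 → ℂ} {D' : Fin (n' + 1) → Fin (n' + 1) → SU2 → ℂ}
    (hD : IsWigner n D) (hD' : IsWigner n' D') (k : Fin (n + 1)) (k' : Fin (n' + 1))
    (a b : ℂ) (hab : a * conj a + b * conj b = 1) (z₀ z₁ w₀ w₁ : ℂ) :
    wG (fun j j' => ∫ g, D j k g * conj (D' j' k' g) ∂μ)
        (a * z₀ + b * z₁) (-conj b * z₀ + conj a * z₁)
        (a * w₀ + b * w₁) (-conj b * w₀ + conj a * w₁) =
      wG (fun j j' => ∫ g, D j k g * conj (D' j' k' g) ∂μ) z₀ z₁ w₀ w₁ := by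
  have h1 : ∀ z₀ z₁ w₀ w₁ : ℂ, wG (fun j j' => ∫ g, D j k g * conj (D' j' k' g) ∂μ) z₀ z₁ w₀ w₁
      = ∫ g, wf n k g z₀ z₁ * conj (wf n' k' g w₀ w₁) ∂μ := by
    intro z₀ z₁ w₀ w₁
    have h2 : ∀ g, wf n k g z₀ z₁ * conj (wf n' k' g w₀ w₁) =
        ∑ j : Fin (n + 1), ∑ j' : Fin (n' + 1), wE n j z₀ z₁ * (conj (wE n' j' w₀ w₁) *
          (D j k g * conj (D' j' k' g))) := by
      intro g
      simp only [← wigner_sum hD, ← wigner_sum hD', map_sum, map_mul, Finset.sum_mul_sum]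
      refine Finset.sum_congr rfl fun j _ => ?_
      refine Finset.sum_congr rfl fun j' _ => ?_
      ring
    simp only [h2]
    have hi : ∀ j j', Integrable (fun g => wE n j z₀ z₁ * (conj (wE n' j' w₀ w₁) *
          (D j k g * conj (D' j' k' g)))) μ := fun j j' =>
      ((wigner_integrable μ hD hD' j k j' k').const_mul _).const_mul _
    rw [integral_finsetSum _ (fun j _ => integrable_finsetSum _ (fun j' _ => hi j j'))]
    refine Finset.sum_congr rfl fun j _ => ?_
    rw [integral_finsetSum _ (fun j' _ => hi j j'), Finset.mul_sum]
    refine Finset.sum_congr rfl fun j' _ => ?_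
    rw [integral_const_mul, integral_const_mul]
  rw [h1, h1]
  obtain ⟨x, hx, hy⟩ := exists_SU2 (conj a) (conj b) (by
    simp only [Complex.conj_conj]; linear_combination hab)
  rw [← integral_mul_left_eq_self (fun g => wf n k g z₀ z₁ * conj (wf n' k' g w₀ w₁)) x]
  simp only [wf_mul, hx, hy, Complex.conj_conj]

lemma herm_expand (μ : Measure SU2) [IsProbabilityMeasure μ] {n n' : ℕ}
    {D : Fin (n + 1) → Fin (n + 1) → SU2 → ℂ} {D' : Fin (n' + 1) → Fin (n' + 1) → SU2 → ℂ}
    (hD : IsWigner n D) (hD' : IsWigner n' D') (v w : Fin (n + 1) → ℂ) (v' w' : Fin (n' + 1) → ℂ) :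
    ∫ g, conj (herm (DVec D g v) w) * herm (DVec D' g v') w' ∂μ
      = ∑ j, ∑ k, ∑ j', ∑ k', (v k * conj (w j) * (conj (v' k') * w' j')) *
          ∫ g, D j k g * conj (D' j' k' g) ∂μ := by
  have h2 : ∀ g, conj (herm (DVec D g v) w) * herm (DVec D' g v') w' =
      ∑ j, ∑ k, ∑ j', ∑ k', (v k * conj (w j) * (conj (v' k') * w' j')) *
          (D j k g * conj (D' j' k' g)) := by
    intro g
    simp only [herm, DVec, map_sum, map_mul, Complex.conj_conj]
    rw [Finset.sum_mul_sum]
    refine Finset.sum_congr rfl fun j _ => ?_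
    rw [Finset.sum_comm (s := (Finset.univ : Finset (Fin (n + 1))))]
    refine Finset.sum_congr rfl fun j' _ => ?_
    rw [mul_mul_mul_comm, Finset.sum_mul_sum, Finset.sum_mul]
    refine Finset.sum_congr rfl fun k _ => ?_
    rw [Finset.sum_mul]
    refine Finset.sum_congr rfl fun k' _ => ?_
    ring
  simp only [h2]
  have hi : ∀ j k j' k', Integrable (fun g => (v k * conj (w j) * (conj (v' k') * w' j')) *
          (D j k g * conj (D' j' k' g))) μ := fun j k j' k' =>
      ((wigner_integrable μ hD hD' j k j' k').const_mul _)
  have hi1 := fun j k j' => integrable_finsetSum Finset.univ (fun k' _ => hi j k j' k')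
  have hi2 := fun j k => integrable_finsetSum Finset.univ (fun j' _ => hi1 j k j')
  have hi3 := fun j => integrable_finsetSum Finset.univ (fun k _ => hi2 j k)
  rw [integral_finsetSum _ (fun j _ => hi3 j)]
  refine Finset.sum_congr rfl fun j _ => ?_
  rw [integral_finsetSum _ (fun k _ => hi2 j k)]
  refine Finset.sum_congr rfl fun k _ => ?_
  rw [integral_finsetSum _ (fun j' _ => hi1 j k j')]
  refine Finset.sum_congr rfl fun j' _ => ?_
  rw [integral_finsetSum _ (fun k' _ => hi j k j' k')]
  refine Finset.sum_congr rfl fun k' _ => ?_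
  rw [integral_const_mul]

lemma schur_ne (μ : Measure SU2) [μ.IsHaarMeasure] [IsProbabilityMeasure μ] {n n' : ℕ}
    (hn : n ≠ n')
    {D : Fin (n + 1) → Fin (n + 1) → SU2 → ℂ} {D' : Fin (n' + 1) → Fin (n' + 1) → SU2 → ℂ}
    (hD : IsWigner n D) (hD' : IsWigner n' D') (j k : Fin (n + 1)) (j' k' : Fin (n' + 1)) :
    ∫ g, D j k g * conj (D' j' k' g) ∂μ = 0 := by
  rcases lt_or_gt_of_ne hn with hlt | hlt
  · exact congrFun (congrFun (inv_ne hlt _ (wigner_inv μ hD hD' k k')) j) j'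
  · have h1 : ∫ g, D' j' k' g * conj (D j k g) ∂μ = 0 :=
      congrFun (congrFun (inv_ne hlt _ (wigner_inv μ hD' hD k' k)) j') j
    have h2 := congrArg conj h1
    rw [← integral_conj] at h2
    simpa [mul_comm] using h2

lemma schur_eq (μ : Measure SU2) [μ.IsHaarMeasure] [IsProbabilityMeasure μ] {n : ℕ}
    {D : Fin (n + 1) → Fin (n + 1) → SU2 → ℂ} (hD : IsWigner n D) (j k j' k' : Fin (n + 1)) :
    ∫ g, D j k g * conj (D j' k' g) ∂μ =
      if j = j' then (if k = k' then ((n : ℂ) + 1)⁻¹ else 0) else 0 := by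
  obtain ⟨c, hc⟩ := inv_eq _ (wigner_inv μ hD hD k k')
  have hc' : ∀ j j', ∫ g, D j k g * conj (D j' k' g) ∂μ = if j = j' then c else 0 :=
    fun j j' => congrFun (congrFun hc j) j'
  rw [hc']
  have h1 : ∑ j : Fin (n + 1), ∫ g, D j k g * conj (D j k' g) ∂μ = if k = k' then 1 else 0 := by
    rw [← integral_finsetSum _ (fun j _ => wigner_integrable μ hD hD j k j k')]
    simp only [wigner_unitary' hD]
    simp
  simp only [hc', if_true, Finset.sum_const, Finset.card_univ, Fintype.card_fin,
    nsmul_eq_mul, Nat.cast_add, Nat.cast_one] at h1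
  have hn : (n : ℂ) + 1 ≠ 0 := by exact_mod_cast Nat.succ_ne_zero n
  congr 1
  rw [eq_comm, ← mul_right_inj' hn, h1]
  split_ifs <;> simp [hn]

/-- Schur orthogonality in vector form:
`∫ conj ⟨D^ℓ(g)v, w⟩ ⟨D^{ℓ'}(g)v', w'⟩ dμ = δ_{ℓℓ'} conj ⟨v,v'⟩ ⟨w,w'⟩/(2ℓ+1)`.
The case `ℓ = ℓ'` and the case `ℓ ≠ ℓ'` are stated separately. -/
theorem wigner_schur_vector_form (μ : Measure SU2) [μ.IsHaarMeasure]
    [IsProbabilityMeasure μ] :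
    (∀ (n : ℕ) (D D' : Fin (n + 1) → Fin (n + 1) → SU2 → ℂ),
      IsWigner n D → IsWigner n D' →
      ∀ v w v' w' : Fin (n + 1) → ℂ,
        ∫ g, conj (herm (DVec D g v) w) * herm (DVec D' g v') w' ∂μ
          = conj (herm v v') * herm w w' * ((n : ℂ) + 1)⁻¹) ∧
    (∀ n n' : ℕ, n ≠ n' →
      ∀ (D : Fin (n + 1) → Fin (n + 1) → SU2 → ℂ)
        (D' : Fin (n' + 1) → Fin (n' + 1) → SU2 → ℂ),
      IsWigner n D → IsWigner n' D' →
      ∀ (v w : Fin (n + 1) → ℂ) (v' w' : Fin (n' + 1) → ℂ),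
        ∫ g, conj (herm (DVec D g v) w) * herm (DVec D' g v') w' ∂μ = 0) := by
  refine ⟨?_, ?_⟩
  · intro n D D' hD hD' v w v' w'
    obtain rfl := wigner_unique hD hD'
    rw [herm_expand μ hD hD]
    simp only [schur_eq μ hD, mul_ite, mul_zero, Finset.sum_ite_eq, Finset.mem_univ, if_true,
      Finset.sum_ite_irrel, Finset.sum_const_zero]
    simp only [herm, map_sum, map_mul, Complex.conj_conj, Finset.sum_mul, Finset.mul_sum]
    refine Finset.sum_congr rfl fun j _ => ?_
    refine Finset.sum_congr rfl fun k _ => ?_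
    ring
  · intro n n' hn D D' hD hD' v w v' w'
    rw [herm_expand μ hD hD']
    simp [schur_ne μ hn hD hD']
end
end
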